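/- arXiv:2201.04825 — 5 statements merged into one kernel-verified Lean document; each statement's English description precedes it below -/
import Mathlib

section
/- For every dimension d ≥ 2, every ξ ∈ ℂ^d and every η₁ ∈ ℂ one has det(U₀(ξ) + η₁ e₁⊗e₁) = (ξ² + ξ₁η₁) ξ₁^{d−2} (for d = 2 the factor ξ₁^{d−2} is interpreted as 1). -/
open Matrix Finset

noncomputable section

/-- `tens ξ η` is the matrix `ξ ⊗ η` acting by `(ξ ⊗ η) g = ⟨ξ, g⟩ η`
(bilinear pairing, no conjugation); its `(i,j)` entry is `η i * ξ j`. -/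
def tens {n : ℕ} (ξ η : Fin n → ℂ) : Matrix (Fin n) (Fin n) ℂ :=
  Matrix.vecMulVec η ξ

/-- `U₀(ξ) = ξ₁ I + ∑_{j=2}^d ξ_j (e_j ⊗ e₁ - e₁ ⊗ e_j)` (0-indexed). -/
def U0 {n : ℕ} (ξ : Fin (n + 1) → ℂ) : Matrix (Fin (n + 1)) (Fin (n + 1)) ℂ :=
  ξ 0 • (1 : Matrix (Fin (n + 1)) (Fin (n + 1)) ℂ) +
    ∑ j ∈ Finset.univ.filter (fun j : Fin (n + 1) => j ≠ 0),
      ξ j • (tens (Pi.single j 1) (Pi.single 0 1) - tens (Pi.single 0 1) (Pi.single j 1))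

/-- Arrowhead matrix. -/
def arrowM {R : Type*} [CommRing R] {n : ℕ} (a c : R) (v : Fin (n + 1) → R) :
    Matrix (Fin (n + 1)) (Fin (n + 1)) R :=
  Matrix.of (Fin.cons (Fin.cons a (fun j => v j.succ))
    (fun i => Fin.cons (-v i.succ) (fun j => if i = j then c else 0)))

/-- Column-operation matrix. -/
def arrowL {R : Type*} [CommRing R] {n : ℕ} (c : R) (v : Fin (n + 1) → R) :
    Matrix (Fin (n + 1)) (Fin (n + 1)) R :=
  Matrix.of (Fin.cons (Fin.cons c (fun _ => 0))
    (fun i => Fin.cons (v i.succ) (fun j => if i = j then 1 else 0)))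

/-- The product. -/
def arrowB {R : Type*} [CommRing R] {n : ℕ} (a c : R) (v : Fin (n + 1) → R) :
    Matrix (Fin (n + 1)) (Fin (n + 1)) R :=
  Matrix.of (Fin.cons (Fin.cons (a * c + ∑ j : Fin n, v j.succ * v j.succ) (fun j => v j.succ))
    (fun i => Fin.cons 0 (fun j => if i = j then c else 0)))

lemma arrow_mul {R : Type*} [CommRing R] {n : ℕ} (a c : R) (v : Fin (n + 1) → R) :
    arrowM a c v * arrowL c v = arrowB a c v := by
  ext i j
  rw [Matrix.mul_apply, Fin.sum_univ_succ]
  refine Fin.cases ?_ (fun i => ?_) i <;> refine Fin.cases ?_ (fun j => ?_) j <;>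
    simp [arrowM, arrowL, arrowB]
  ring

lemma arrowL_det {R : Type*} [CommRing R] {n : ℕ} (c : R) (v : Fin (n + 1) → R) :
    (arrowL c v).det = c := by
  rw [Matrix.det_of_lowerTriangular, Fin.prod_univ_succ]
  · simp [arrowL]
  · suffices H : ∀ i j : Fin (n + 1), i < j → arrowL c v i j = 0 from fun i j h => H i j h
    intro i j
    refine Fin.cases ?_ (fun i => ?_) i <;> refine Fin.cases ?_ (fun j => ?_) j <;>
      simp [arrowL]
    intro h h'
    exact absurd h' (ne_of_lt h)

lemma arrowB_det {R : Type*} [CommRing R] {n : ℕ} (a c : R) (v : Fin (n + 1) → R) :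
    (arrowB a c v).det = (a * c + ∑ j : Fin n, v j.succ * v j.succ) * c ^ n := by
  rw [Matrix.det_of_upperTriangular, Fin.prod_univ_succ]
  · simp [arrowB]
  · intro i j
    refine Fin.cases ?_ (fun i => ?_) i <;> refine Fin.cases ?_ (fun j => ?_) j <;>
      simp [arrowB]
    intro h h'
    exact absurd h' (ne_of_gt h)

lemma arrow_det_mul {R : Type*} [CommRing R] {n : ℕ} (a c : R) (v : Fin (n + 1) → R) :
    (arrowM a c v).det * c = (a * c + ∑ j : Fin n, v j.succ * v j.succ) * c ^ n := by
  rw [← arrowB_det, ← arrow_mul, Matrix.det_mul, arrowL_det]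

open Polynomial in
lemma arrow_det {n : ℕ} (a c : ℂ) (v : Fin (n + 2) → ℂ) :
    (arrowM a c v).det = (a * c + ∑ j : Fin (n + 1), v j.succ * v j.succ) * c ^ n := by
  have h := arrow_det_mul (C a) (X : ℂ[X]) (fun i => C (v i))
  rw [pow_succ, ← mul_assoc] at h
  have h2 := congrArg (Polynomial.evalRingHom c) (mul_right_cancel₀ Polynomial.X_ne_zero h)
  rw [RingHom.map_det] at h2
  have h3 : (Polynomial.evalRingHom c).mapMatrix (arrowM (C a) (X : ℂ[X]) (fun i => C (v i)))
      = arrowM a c v := by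
    ext i j
    refine Fin.cases ?_ (fun i => ?_) i <;> refine Fin.cases ?_ (fun j => ?_) j <;>
      simp [arrowM]
    split_ifs <;> simp
  rw [h3] at h2
  rw [h2]
  simp [Polynomial.eval_finset_sum]

/-- For every `d ≥ 2`, `ξ ∈ ℂ^d`, `η₁ ∈ ℂ`:
`det(U₀(ξ) + η₁ e₁⊗e₁) = (ξ² + ξ₁ η₁) ξ₁^{d-2}` (here the dimension is `d + 2`). -/
theorem statement2 (d : ℕ) (ξ : Fin (d + 2) → ℂ) (η₁ : ℂ) :
    (U0 ξ + η₁ • tens (Pi.single 0 1) (Pi.single 0 1)).det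
      = ((∑ i, ξ i * ξ i) + ξ 0 * η₁) * ξ 0 ^ d := by
  have h : U0 ξ + η₁ • tens (Pi.single 0 1) (Pi.single 0 1) = arrowM (ξ 0 + η₁) (ξ 0) ξ := by
    ext i j
    rw [U0, Finset.sum_filter, Fin.sum_univ_succ]
    refine Fin.cases ?_ (fun i => ?_) i <;> refine Fin.cases ?_ (fun j => ?_) j <;>
      simp [arrowM, tens, Matrix.sum_apply, Matrix.vecMulVec_apply, Pi.single_apply,
        Matrix.one_apply, Fin.succ_ne_zero, (Fin.succ_ne_zero _).symm]
  rw [h, arrow_det, Fin.sum_univ_succ (fun i => ξ i * ξ i)]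
  ring
end
end

section
/- Let d ≥ 3, let ξ₁ ∈ ℂ with ξ₁ ≠ 0, let s ∈ ℝ, and let η₁ ∈ ℂ be such that ξ₁² + s² + ξ₁η₁ ≠ 0. Then the matrix U₀(ξ₁e₁ + s e₂) + η₁ e₁⊗e₁ is invertible and its inverse is the d×d matrix B whose upper-left 2×2 block (in the convention that the (i,j) entry of a matrix M is the coefficient of g_j in the i-th component of Mg) is (ξ₁² + s² + ξ₁η₁)^{−1} · [[ξ₁, −s],[s, ξ₁+η₁]], whose diagonal entries B_{jj} for 3 ≤ j ≤ d all equal ξ₁^{−1}, and all of whose other entries are 0. -/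
open Matrix Finset

noncomputable section

/-- Lemma 2.2, explicit inverse (dimension `d + 3 ≥ 3`): the inverse of
`U₀(ξ₁e₁ + s e₂) + η₁ e₁⊗e₁` is the matrix `B` with upper-left 2×2 block
`Δ⁻¹ [[ξ₁, -s],[s, ξ₁+η₁]]`, diagonal entries `ξ₁⁻¹` in positions `j ≥ 3`,
and zeros elsewhere, where `Δ = ξ₁² + s² + ξ₁η₁`. -/
theorem statement4 (d : ℕ) (ξ₁ : ℂ) (hξ₁ : ξ₁ ≠ 0) (s : ℝ) (η₁ : ℂ)
    (hΔ : ξ₁ ^ 2 + (s : ℂ) ^ 2 + ξ₁ * η₁ ≠ 0) :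
    let Δ : ℂ := ξ₁ ^ 2 + (s : ℂ) ^ 2 + ξ₁ * η₁
    let M := U0 (ξ₁ • (Pi.single 0 1 : Fin (d + 3) → ℂ) + (s : ℂ) • (Pi.single 1 1 : Fin (d + 3) → ℂ))
      + η₁ • tens (Pi.single 0 1) (Pi.single 0 1)
    let B : Matrix (Fin (d + 3)) (Fin (d + 3)) ℂ := fun i j =>
      if i = 0 then (if j = 0 then ξ₁ / Δ else if j = 1 then -(s : ℂ) / Δ else 0)
      else if i = 1 then (if j = 0 then (s : ℂ) / Δ else if j = 1 then (ξ₁ + η₁) / Δ else 0)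
      else if j = i then ξ₁⁻¹ else 0
    M * B = 1 ∧ B * M = 1 := by
  intro Δ M B
  have h10 : (1 : Fin (d + 3)) ≠ 0 := by simp
  have hM : M = ξ₁ • (1 : Matrix (Fin (d + 3)) (Fin (d + 3)) ℂ)
      + (s : ℂ) • (tens (Pi.single 1 1) (Pi.single 0 1) - tens (Pi.single 0 1) (Pi.single 1 1))
      + η₁ • tens (Pi.single 0 1) (Pi.single 0 1) := by
    simp only [M, U0]
    rw [Finset.sum_eq_single (1 : Fin (d + 3))]
    · simp [h10, h10.symm]
    · intro j hj hj1
      have hj0 : j ≠ 0 := by simpa using hj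
      simp [hj0, hj1]
    · intro h
      simp at h
  have key : M * B = 1 := by
    rw [hM]
    ext i j
    simp only [tens, Matrix.add_mul, Matrix.sub_mul, Matrix.smul_mul, Matrix.one_mul,
      Matrix.vecMulVec_mul, Matrix.single_one_vecMul, Matrix.add_apply, Matrix.sub_apply,
      Matrix.smul_apply, Matrix.vecMulVec_apply, Matrix.row_apply, smul_eq_mul, Matrix.one_apply]
    have hD : Δ ≠ 0 := hΔ
    by_cases hi0 : i = 0
    · subst hi0
      by_cases hj0 : j = 0
      · subst hj0
        simp [B]
        field_simp
        simp only [Δ]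
      · by_cases hj1 : j = 1
        · subst hj1
          simp [B]
          field_simp
          ring
        · simp [B, hj0, hj1, Ne.symm hj0]
    · by_cases hi1 : i = 1
      · subst hi1
        by_cases hj0 : j = 0
        · subst hj0
          simp [B]
          field_simp
          ring
        · by_cases hj1 : j = 1
          · subst hj1
            simp [B]
            field_simp
            simp only [Δ]
            ring
          · simp [B, hj0, hj1, Ne.symm hj1]
      · by_cases hij : j = i
        · subst hij
          simp [B, hi0, hi1, hξ₁]
        · simp [B, hi0, hi1, hij, Ne.symm hij]
  exact ⟨key, mul_eq_one_comm.mp key⟩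
end
end

section
/- Let d ≥ 2, let U be an invertible d×d complex matrix and let ξ, ν ∈ ℂ^d satisfy U ξ = ξ² ν with ξ² ≠ 0, and suppose that U Uᵀ commutes with ν⊗ν. Then (ξ² I_d − ξ⊗ξ) Uᵀ (ν⊗ν) = 0; in other words, with Π_s(ξ) = ξ²I_d − ξ⊗ξ and Π_p(ν) = ν⊗ν, one has Π_s(ξ) Uᵀ Π_p(ν) = 0. -/
open Matrix Finset

noncomputable section

/-- If `U` is invertible, `U ξ = ξ² ν` with `ξ² ≠ 0`, and `UUᵀ` commutes with `ν⊗ν`,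
then `(ξ²I - ξ⊗ξ) Uᵀ (ν⊗ν) = 0`, i.e. `Π_s(ξ) Uᵀ Π_p(ν) = 0`. -/
theorem statement11 (d : ℕ) (U : Matrix (Fin (d + 2)) (Fin (d + 2)) ℂ)
    (hU : IsUnit U) (ξ ν : Fin (d + 2) → ℂ)
    (h : U.mulVec ξ = (∑ i, ξ i * ξ i) • ν) (hξ : (∑ i, ξ i * ξ i) ≠ 0)
    (hcomm : Commute (U * Uᵀ) (tens ν ν)) :
    ((∑ i, ξ i * ξ i) • (1 : Matrix (Fin (d + 2)) (Fin (d + 2)) ℂ) - tens ξ ξ)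
        * Uᵀ * tens ν ν = 0 := by
  by_cases hν : ν = 0
  · subst hν
    simp [tens]
  obtain ⟨k, hk⟩ : ∃ k, ν k ≠ 0 := by
    by_contra hc
    push Not at hc
    exact hν (funext hc)
  set s : ℂ := ∑ i, ξ i * ξ i with hs
  have hc := hcomm.eq
  simp only [tens, Matrix.mul_vecMulVec, Matrix.vecMulVec_mul] at hc
  set c : ℂ := (ν ᵥ* (U * Uᵀ)) k with hcdef
  have h1 : (U * Uᵀ) *ᵥ ν = (c / ν k) • ν := by
    funext i
    have h2 := congrFun (congrFun hc i) k
    simp only [Matrix.vecMulVec_apply] at h2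
    rw [← hcdef] at h2
    rw [Pi.smul_apply, smul_eq_mul]
    field_simp
    rw [h2]
    ring
  have hνξ : ν = s⁻¹ • (U *ᵥ ξ) := by
    rw [h, smul_smul, inv_mul_cancel₀ hξ, one_smul]
  have h3 : Uᵀ *ᵥ ν = (c / ν k * s⁻¹) • ξ := by
    apply Matrix.mulVec_injective_of_isUnit hU
    rw [Matrix.mulVec_mulVec, h1, Matrix.mulVec_smul, mul_smul, ← hνξ]
  have h4 : (vecMulVec ξ ξ) *ᵥ ξ = s • ξ := by
    funext i
    simp only [Matrix.mulVec, dotProduct, Matrix.vecMulVec_apply, Pi.smul_apply, smul_eq_mul, hs,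
      Finset.sum_mul]
    exact Finset.sum_congr rfl fun j _ => by ring
  simp only [tens]
  rw [Matrix.mul_assoc, Matrix.mul_vecMulVec, Matrix.mul_vecMulVec, h3, Matrix.mulVec_smul,
    Matrix.sub_mulVec, h4, Matrix.smul_mulVec, Matrix.one_mulVec, sub_self, smul_zero]
  simp
end
end

section
/- Let d ≥ 2, let ζ' ∈ ℂ^{d−1}, set ζ = (0, ζ') ∈ ℂ^d and r₀ = ζ², and let ρ_s, ρ_p ∈ ℂ. Then det( U₀(ζ)ᵀ + ρ_s (I_d − e₁⊗e₁) + ρ_p (e₁⊗e₁) ) = (r₀ + ρ_s ρ_p) ρ_s^{d−2} (for d = 2 the factor ρ_s^{d−2} is interpreted as 1). -/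
open Matrix Finset

noncomputable section

def bord {n : ℕ} (a : ℂ) (u v : Fin n → ℂ) (s : ℂ) : Matrix (Fin (n + 1)) (Fin (n + 1)) ℂ :=
  Matrix.of fun i j => Fin.cases (Fin.cases a u j)
    (fun k => Fin.cases (v k) (fun l => if k = l then s else 0) j : Fin n → ℂ) i

theorem bord_mul {n : ℕ} (a : ℂ) (u v : Fin n → ℂ) (s : ℂ) :
    bord a u v s * bord s 0 (-v) 1 = bord (a * s - ∑ i, u i * v i) u 0 s := by
  ext i j
  rw [Matrix.mul_apply, Fin.sum_univ_succ]
  refine Fin.cases ?_ (fun k => ?_) i <;> refine Fin.cases ?_ (fun l => ?_) j <;>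
    simp [bord, Finset.sum_neg_distrib, sub_eq_add_neg, mul_comm]

theorem bord_det_upper {n : ℕ} (a : ℂ) (u : Fin n → ℂ) (s : ℂ) :
    (bord a u 0 s).det = a * s ^ n := by
  rw [Matrix.det_of_isUpperTriangular, Fin.prod_univ_succ]
  · simp [bord]
  · intro i j
    refine Fin.cases ?_ (fun k => ?_) i <;> refine Fin.cases ?_ (fun l => ?_) j <;>
      simp [bord]
    intro h h2
    exact absurd h2 h.ne'

theorem bord_det_lower {n : ℕ} (a : ℂ) (v : Fin n → ℂ) (s : ℂ) :
    (bord a 0 v s).det = a * s ^ n := by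
  have h : bord a 0 v s = (bord a v 0 s)ᵀ := by
    ext i j
    refine Fin.cases ?_ (fun k => ?_) i <;> refine Fin.cases ?_ (fun l => ?_) j <;>
      simp [bord, eq_comm]
  rw [h, Matrix.det_transpose, bord_det_upper]

theorem bord_det {n : ℕ} (a : ℂ) (u v : Fin (n + 1) → ℂ) (s : ℂ) :
    (bord a u v s).det = (a * s - ∑ i, u i * v i) * s ^ n := by
  have key : ∀ s : ℂ, s ≠ 0 → (bord a u v s).det = (a * s - ∑ i, u i * v i) * s ^ n := by
    intro s hs
    have h := congrArg Matrix.det (bord_mul a u v s)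
    rw [Matrix.det_mul, bord_det_lower, bord_det_upper] at h
    apply mul_right_cancel₀ hs
    rw [one_pow, mul_one] at h
    rw [h]; ring
  have hc : Continuous fun s : ℂ => (bord a u v s).det := by
    apply Continuous.matrix_det
    refine continuous_pi fun i => continuous_pi fun j => ?_
    refine Fin.cases ?_ (fun k => ?_) i <;> refine Fin.cases ?_ (fun l => ?_) j <;>
      simp only [bord, Matrix.of_apply, Fin.cases_zero, Fin.cases_succ]
    · exact continuous_const
    · exact continuous_const
    · exact continuous_const
    · split_ifs
      · exact continuous_id
      · exact continuous_const
  have hc2 : Continuous fun s : ℂ => (a * s - ∑ i, u i * v i) * s ^ n := by fun_prop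
  exact congrFun (Continuous.ext_on (dense_compl_singleton (0 : ℂ)) hc hc2
    (fun s hs => key s hs)) s

/-- With `ζ = (0, ζ')`, `r₀ = ζ²`:
`det(U₀(ζ)ᵀ + ρ_s (I - e₁⊗e₁) + ρ_p (e₁⊗e₁)) = (r₀ + ρ_s ρ_p) ρ_s^{d-2}`
(the dimension here is `d + 2`). -/
theorem statement12 (d : ℕ) (ζ' : Fin (d + 1) → ℂ) (ρs ρp : ℂ) :
    let ζ : Fin (d + 2) → ℂ := Matrix.vecCons 0 ζ'
    ((U0 ζ)ᵀ
        + ρs • ((1 : Matrix (Fin (d + 2)) (Fin (d + 2)) ℂ)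
            - tens (Pi.single 0 1) (Pi.single 0 1))
        + ρp • tens (Pi.single 0 1) (Pi.single 0 1)).det
      = ((∑ i, ζ i * ζ i) + ρs * ρp) * ρs ^ d := by
  intro ζ
  have hM : ((U0 ζ)ᵀ
        + ρs • ((1 : Matrix (Fin (d + 2)) (Fin (d + 2)) ℂ)
            - tens (Pi.single 0 1) (Pi.single 0 1))
        + ρp • tens (Pi.single 0 1) (Pi.single 0 1)) = bord ρp (-ζ') ζ' ρs := by
    have hU : U0 ζ = bord 0 ζ' (-ζ') 0 := by
      ext i j
      simp only [U0, Matrix.add_apply, Matrix.sum_apply, Finset.sum_filter]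
      rw [Fin.sum_univ_succ]
      refine Fin.cases ?_ (fun k => ?_) i <;> refine Fin.cases ?_ (fun l => ?_) j <;>
        simp [bord, ζ, tens, Matrix.vecMulVec_apply, Pi.single_apply, Fin.succ_ne_zero]
    rw [hU]
    ext i j
    refine Fin.cases ?_ (fun k => ?_) i <;> refine Fin.cases ?_ (fun l => ?_) j <;>
      simp [bord, tens, Matrix.vecMulVec_apply, Pi.single_apply, Matrix.one_apply,
        Fin.succ_ne_zero, (Fin.succ_ne_zero _).symm]
  have hs : ∑ i, ζ i * ζ i = ∑ i, ζ' i * ζ' i := by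
    rw [Fin.sum_univ_succ]
    simp [ζ]
  rw [hM, bord_det, hs]
  simp only [Pi.neg_apply, neg_mul, Finset.sum_neg_distrib]
  ring
end
end

section
/- Let ζ₂, ρ_s, ρ_p, c_s, c_p, z, n ∈ ℂ, set r₀ = ζ₂², μ = c_s, λ = c_p − 2c_s, and assume D := r₀ + ρ_s ρ_p ≠ 0, z²n = c_s(ρ_s² + r₀) and z²n = c_p(ρ_p² + r₀). Let ζ = (0, ζ₂) ∈ ℂ², Π_p = e₁⊗e₁, Π_s = I₂ − e₁⊗e₁, and W₀ = U₀(ζ)ᵀ + ρ_s Π_s + ρ_p Π_p (a 2×2 complex matrix, invertible since det W₀ = D ≠ 0); set T₂ = W₀^{−1}. Then λ ζ⊗e₁ + μ e₁⊗ζ + (c_s ρ_s² Π_s + c_p ρ_p² Π_p) T₂ + (c_s Π_s + c_p Π_p) U₀(ζ)ᵀ (ρ_s Π_s + ρ_p Π_p) T₂ equals the 2×2 matrix whose rows are ( z²n ρ_s / D , (−2μ D + z²n) ζ₂ / D ) and ( (2μ D − z²n) ζ₂ / D , z²n ρ_p / D ), in the convention that the (i,j) entry of a matrix M is the coefficient of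 g_j in the i-th component of Mg. -/
open Matrix Finset

noncomputable section

/-- The 2×2 principal symbol computation (formula (5.25)): with `r₀ = ζ₂²`, `μ = c_s`,
`λ = c_p - 2c_s`, `D = r₀ + ρ_sρ_p ≠ 0`, `z²n = c_s(ρ_s² + r₀) = c_p(ρ_p² + r₀)`,
and `T₂ = W₀⁻¹` where `W₀ = U₀(ζ)ᵀ + ρ_sΠ_s + ρ_pΠ_p`, the matrix
`λζ⊗e₁ + μe₁⊗ζ + (c_sρ_s²Π_s + c_pρ_p²Π_p)T₂ + (c_sΠ_s + c_pΠ_p)U₀(ζ)ᵀ(ρ_sΠ_s + ρ_pΠ_p)T₂`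
equals `m₂⁰` given by (5.25). -/
theorem statement17 (ζ₂ ρs ρp cs cp z n : ℂ)
    (hD : ζ₂ ^ 2 + ρs * ρp ≠ 0)
    (hs : z ^ 2 * n = cs * (ρs ^ 2 + ζ₂ ^ 2))
    (hp : z ^ 2 * n = cp * (ρp ^ 2 + ζ₂ ^ 2)) :
    let D : ℂ := ζ₂ ^ 2 + ρs * ρp
    let μ : ℂ := cs
    let lam : ℂ := cp - 2 * cs
    let e1 : Fin 2 → ℂ := Pi.single 0 1
    let ζ : Fin 2 → ℂ := ![0, ζ₂]
    let Pp := tens e1 e1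
    let Ps := (1 : Matrix (Fin 2) (Fin 2) ℂ) - tens e1 e1
    let W₀ := (U0 ζ)ᵀ + ρs • Ps + ρp • Pp
    let T₂ := W₀⁻¹
    lam • tens ζ e1 + μ • tens e1 ζ
        + ((cs * ρs ^ 2) • Ps + (cp * ρp ^ 2) • Pp) * T₂
        + (cs • Ps + cp • Pp) * (U0 ζ)ᵀ * (ρs • Ps + ρp • Pp) * T₂
      = !![z ^ 2 * n * ρs / D, (-2 * μ * D + z ^ 2 * n) * ζ₂ / D;
           (2 * μ * D - z ^ 2 * n) * ζ₂ / D, z ^ 2 * n * ρp / D] := by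
  intro D μ lam e1 ζ Pp Ps W₀ T₂
  have hDne : D ≠ 0 := hD
  have hDdef : D = ζ₂ ^ 2 + ρs * ρp := rfl
  have hU : (U0 ζ)ᵀ = !![0, -ζ₂; ζ₂, 0] := by
    have hf : (Finset.univ.filter (fun j : Fin (1 + 1) => j ≠ 0)) = {1} := by decide
    unfold U0
    rw [hf]
    ext i j
    fin_cases i <;> fin_cases j <;> simp [tens, ζ, vecMulVec_apply]
  have hPp : Pp = !![1, 0; 0, 0] := by
    ext i j
    fin_cases i <;> fin_cases j <;> simp [Pp, tens, e1, vecMulVec_apply]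
  have hPs : Ps = !![0, 0; 0, 1] := by
    ext i j
    fin_cases i <;> fin_cases j <;> simp [Ps, tens, e1, vecMulVec_apply]
  have h1 : tens ζ e1 = !![0, ζ₂; 0, 0] := by
    ext i j
    fin_cases i <;> fin_cases j <;> simp [tens, e1, ζ, vecMulVec_apply]
  have h2 : tens e1 ζ = !![0, 0; ζ₂, 0] := by
    ext i j
    fin_cases i <;> fin_cases j <;> simp [tens, e1, ζ, vecMulVec_apply]
  have hT : T₂ = !![ρs / D, ζ₂ / D; -ζ₂ / D, ρp / D] := by
    apply Matrix.inv_eq_right_inv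
    simp only [W₀]
    rw [hU, hPp, hPs]
    ext i j
    fin_cases i <;> fin_cases j <;> simp [Matrix.mul_apply, Fin.sum_univ_two] <;>
      field_simp <;> rw [hDdef] <;> ring
  rw [hT, hU, hPp, hPs, h1, h2]
  clear_value D
  have hμ : μ = cs := rfl
  have hlam : lam = cp - 2 * cs := rfl
  rw [hμ, hlam]
  ext i j
  fin_cases i <;> fin_cases j <;> simp [Matrix.mul_apply, Fin.sum_univ_two] <;>
    field_simp
  · linear_combination (-ρs) * hp
  · rw [hp, hDdef]; ring
  · rw [hs, hDdef]; ring
  · linear_combination (-ρp) * hs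
end
end
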